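/- Let a(ζ), b(ζ) ∈ ℤ[ζ,ζ⁻¹] be Laurent polynomials over ℤ with b nonzero, and suppose b(ζ) = ζ^{−β}·b̃(ζ) where β ∈ ℤ and b̃(ζ) = Σ_{i=0}^{d} b̃_i ζ^i ∈ ℤ[ζ] is a polynomial of degree d with b̃_0 = ±1 and b̃_d = ±1. Then there exist a unique Laurent polynomial Q(ζ) ∈ ℤ[ζ,ζ⁻¹] and a unique polynomial R(ζ) ∈ ℤ[ζ] with deg R < d such that a(ζ) = Q(ζ)·b(ζ) + R(ζ). -/

import Mathlib

open LaurentPolynomial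

/-!
Since `b̃ = X * b̃.divX + b̃₀` with `b̃₀` a unit, `X` is invertible modulo `b̃`. Inverting `X`
therefore does not change the quotient: `ℤ[ζ, ζ⁻¹] ⧸ (b) = ℤ[ζ, ζ⁻¹] ⧸ (b̃) ≃ ℤ[ζ] ⧸ (b̃)`, where
`b` and `b̃` differ by the unit `ζ ^ (-β)`. As the leading coefficient of `b̃` is a unit too, each
class of `ℤ[ζ] ⧸ (b̃)` contains exactly one polynomial of degree `< d`. This is the remainder `R`,
and `Q` is then determined because `b` is not a zero divisor.
-/

theorem existsUnique_quotient_remainder {A B : Type*} [CommRing A] {a b : A} {f : B → A}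
    {P : B → Prop} (hb : b ∈ nonZeroDivisors A) (h : ∃! r, P r ∧ b ∣ a - f r) :
    ∃! qr : A × B, P qr.2 ∧ a = qr.1 * b + f qr.2 := by
  obtain ⟨r, ⟨hr, q, hq⟩, hunique⟩ := h
  refine ⟨(q, r), ⟨hr, by linear_combination hq⟩, ?_⟩
  rintro ⟨q', r'⟩ ⟨hr', hq'⟩
  obtain rfl : r' = r := hunique r' ⟨hr', q', by linear_combination hq'⟩
  have hqq' : q' * b = q * b := by linear_combination hq - hq'
  rw [(mul_cancel_right_mem_nonZeroDivisors hb).mp hqq']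

section Localization

variable {A S : Type*} [CommRing A] [CommRing S] [Algebra A S] (M : Submonoid A)
  [IsLocalization M S] {p : A}

theorem algebraMap_dvd_algebraMap_iff_of_isCoprime (hM : ∀ m ∈ M, IsCoprime m p) {f : A} :
    algebraMap A S p ∣ algebraMap A S f ↔ p ∣ f := by
  refine ⟨fun ⟨s, hs⟩ ↦ ?_, map_dvd (algebraMap A S)⟩
  obtain ⟨⟨g, m⟩, hg⟩ := IsLocalization.surj M s
  have hfm : algebraMap A S (f * m) = algebraMap A S (p * g) := by
    rw [map_mul, map_mul, ← hg, hs, mul_assoc]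
  obtain ⟨c, hc⟩ := IsLocalization.exists_of_eq (M := M) hfm
  have hdvd : p ∣ c * m * f := ⟨c * g, by linear_combination hc⟩
  exact (hM _ (c * m).2).symm.dvd_of_dvd_mul_left hdvd

theorem exists_algebraMap_dvd_sub_of_isCoprime (hM : ∀ m ∈ M, IsCoprime m p) (a : S) :
    ∃ f : A, algebraMap A S p ∣ a - algebraMap A S f := by
  obtain ⟨⟨g, m⟩, hg⟩ := IsLocalization.surj M a
  obtain ⟨u, v, huv⟩ := hM m m.2
  have huv' := congrArg (algebraMap A S) huv
  simp only [map_add, map_mul, map_one] at huv' hg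
  refine ⟨u * g, a * algebraMap A S v, ?_⟩
  rw [map_mul]
  linear_combination -a * huv' + algebraMap A S u * hg

theorem exists_algebraMap_dvd_sub_iff_of_isCoprime (hM : ∀ m ∈ M, IsCoprime m p) (a : S) :
    ∃ f : A, ∀ r : A, algebraMap A S p ∣ a - algebraMap A S r ↔ p ∣ f - r := by
  obtain ⟨f, hf⟩ := exists_algebraMap_dvd_sub_of_isCoprime M hM a
  refine ⟨f, fun r ↦ ?_⟩
  rw [← algebraMap_dvd_algebraMap_iff_of_isCoprime (S := S) M hM, map_sub,
    ← sub_add_sub_cancel a (algebraMap A S f), dvd_add_right hf]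

end Localization

section Polynomial

open Polynomial

variable {R : Type*} [CommRing R] {p : R[X]}

theorem isCoprime_X_of_isUnit_coeff_zero (h0 : IsUnit (p.coeff 0)) : IsCoprime X p := by
  have hC : IsCoprime X (Polynomial.C (p.coeff 0)) :=
    isCoprime_one_right.of_isCoprime_of_dvd_right (isUnit_C.mpr h0).dvd
  simpa only [X_mul_divX_add] using hC.mul_add_left_right p.divX

theorem existsUnique_degree_lt_dvd_sub [Nontrivial R] (hp : IsUnit p.leadingCoeff) (f : R[X]) :
    ∃! r : R[X], r.degree < p.degree ∧ p ∣ f - r := by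
  obtain ⟨u, hu⟩ := hp
  set q := p * Polynomial.C (↑u⁻¹ : R) with hq
  have hmonic : q.Monic := monic_mul_C_of_leadingCoeff_mul_eq_one (by rw [← hu, u.mul_inv])
  have hunit : IsUnit (Polynomial.C (↑u⁻¹ : R)) := isUnit_C.mpr u⁻¹.isUnit
  have hdegree : q.degree = p.degree := degree_mul_C_of_isUnit u⁻¹.isUnit p
  simp only [← hdegree, ← hunit.mul_right_dvd (a := p), ← hq]
  refine ⟨f %ₘ q, ⟨degree_modByMonic_lt f hmonic, f /ₘ q, ?_⟩, fun r ⟨hr, hdvd⟩ ↦ ?_⟩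
  · linear_combination -modByMonic_add_div f q
  · rw [modByMonic_eq_of_dvd_sub hmonic hdvd, (modByMonic_eq_self_iff hmonic).mpr hr]

theorem existsUnique_degree_lt_toLaurent_dvd_sub [Nontrivial R] (h0 : IsUnit (p.coeff 0))
    (hp : IsUnit p.leadingCoeff) (a : R[T;T⁻¹]) :
    ∃! r : R[X], r.degree < p.degree ∧ toLaurent p ∣ a - toLaurent r := by
  have hpowers : ∀ m ∈ Submonoid.powers (X : R[X]), IsCoprime m p := by
    rintro _ ⟨n, rfl⟩
    exact (isCoprime_X_of_isUnit_coeff_zero h0).pow_left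
  obtain ⟨f, hf⟩ := exists_algebraMap_dvd_sub_iff_of_isCoprime _ hpowers a
  simpa only [← algebraMap_eq_toLaurent, hf] using existsUnique_degree_lt_dvd_sub hp f

theorem toLaurent_mem_nonZeroDivisors (hp : p ∈ nonZeroDivisors R[X]) :
    toLaurent p ∈ nonZeroDivisors R[T;T⁻¹] :=
  IsLocalization.nonZeroDivisors_le_comap (Submonoid.powers (X : R[X])) R[T;T⁻¹] hp

theorem stmt_6_general [Nontrivial R] (a b : R[T;T⁻¹]) (β : ℤ) (btil : R[X])
    (h0 : IsUnit (btil.coeff 0)) (hlead : IsUnit btil.leadingCoeff)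
    (hb_eq : b = T (-β) * toLaurent btil) :
    ∃! QR : R[T;T⁻¹] × R[X], QR.2.degree < btil.degree ∧ a = QR.1 * b + toLaurent QR.2 := by
  have hbtil : toLaurent btil ∈ nonZeroDivisors R[T;T⁻¹] :=
    toLaurent_mem_nonZeroDivisors
      (mem_nonZeroDivisors_of_leadingCoeff hlead.mem_nonZeroDivisors)
  have hb : b ∈ nonZeroDivisors R[T;T⁻¹] :=
    hb_eq ▸ mul_mem (isUnit_T (-β)).mem_nonZeroDivisors hbtil
  have hdvd : ∀ c, b ∣ c ↔ toLaurent btil ∣ c := fun c ↦ by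
    rw [hb_eq, T_mul, (isUnit_T (-β)).mul_right_dvd]
  refine existsUnique_quotient_remainder (f := toLaurent)
    (P := fun r ↦ r.degree < btil.degree) hb ?_
  simpa only [hdvd] using existsUnique_degree_lt_toLaurent_dvd_sub h0 hlead a

end Polynomial

/-- Laurent polynomial division algorithm: if
`b(ζ) = ζ^{−β}·b̃(ζ) ∈ ℤ[ζ,ζ⁻¹]` with `b̃ ∈ ℤ[ζ]` of degree `d` whose constant and
top coefficients are `±1`, then any `a(ζ) ∈ ℤ[ζ,ζ⁻¹]` has a unique expression
`a = Q·b + R` with `Q ∈ ℤ[ζ,ζ⁻¹]` and `R ∈ ℤ[ζ]`, `deg R < d`. -/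
theorem stmt_6 (a b : LaurentPolynomial ℤ) (hb : b ≠ 0)
    (β : ℤ) (btil : Polynomial ℤ) (d : ℕ)
    (hdeg : btil.natDegree = d)
    (h0 : btil.coeff 0 = 1 ∨ btil.coeff 0 = -1)
    (hd : btil.coeff d = 1 ∨ btil.coeff d = -1)
    (hb_eq : b = LaurentPolynomial.T (-β) * btil.toLaurent) :
    ∃! QR : LaurentPolynomial ℤ × Polynomial ℤ,
      QR.2.degree < (d : WithBot ℕ) ∧ a = QR.1 * b + QR.2.toLaurent := by
  have hbtil : btil ≠ 0 := by rintro rfl; exact hb (by simpa using hb_eq)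
  subst hdeg
  rw [← Polynomial.degree_eq_natDegree hbtil]
  exact stmt_6_general a b β btil (Int.isUnit_iff.mpr h0) (Int.isUnit_iff.mpr hd) hb_eq
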